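/- arXiv:1106.1189 — 3 statements merged into one kernel-verified Lean document; each statement's English description precedes it below -/
import Mathlib

section
/- Let k ≥ 7 be an integer, define W_k(z) = ((2π)^{2k−1} 2^{2k}/(2k)!) ∑_{j=0}^{k} (−1)^j B_{2j} B_{2k−2j} (1−2^{1−2j})(1−2^{1−2k+2j}) C(2k,2j) z^{2j}, let A_0 = −((2π)^{2k−1} 2^{2k}/(2k)!)(1−2^{1−2k}) B_{2k} be the constant coefficient of W_k(iz), and define the Laurent polynomial w̃_k(z) = (z^k + z^{−k}) + (π²/6)(z^{k−2} + z^{2−k}) + (2/(1−2^{1−2k})) ∑_{m=0}^{k−4} z^{k−4−2m}. Then for every complex number z with |z| = 1, |z^{−k} W_k(iz)/A_0 − w̃_k(z)| < 0.3. -/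
/-- `W_k(z) = ((2π)^{2k−1} 2^{2k}/(2k)!) ∑_{j=0}^{k} (−1)^j B_{2j} B_{2k−2j}
(1−2^{1−2j})(1−2^{1−2k+2j}) C(2k,2j) z^{2j}`. -/
noncomputable def Wfun (k : ℕ) (z : ℂ) : ℂ :=
  (((2 * Real.pi) ^ (2 * k - 1) * 2 ^ (2 * k) / (Nat.factorial (2 * k)) : ℝ) : ℂ) *
    ∑ j ∈ Finset.range (k + 1),
      (-1 : ℂ) ^ j * ((bernoulli (2 * j) : ℚ) : ℂ) * ((bernoulli (2 * k - 2 * j) : ℚ) : ℂ)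
        * (1 - (2 : ℂ) ^ (1 - 2 * (j : ℤ))) * (1 - (2 : ℂ) ^ (1 - 2 * (k : ℤ) + 2 * j))
        * ((Nat.choose (2 * k) (2 * j)) : ℂ) * z ^ (2 * j)

/-- `A_0 = −((2π)^{2k−1} 2^{2k}/(2k)!)(1−2^{1−2k}) B_{2k}`, the constant
coefficient of `W_k(iz)`. -/
noncomputable def WA0 (k : ℕ) : ℂ :=
  -((((2 * Real.pi) ^ (2 * k - 1) * 2 ^ (2 * k) / (Nat.factorial (2 * k)) : ℝ) : ℂ)
      * (1 - (2 : ℂ) ^ (1 - 2 * (k : ℤ))) * ((bernoulli (2 * k) : ℚ) : ℂ))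

/-- The Laurent polynomial `w̃_k(z) = (z^k + z^{−k}) + (π²/6)(z^{k−2} + z^{2−k})
+ (2/(1−2^{1−2k})) ∑_{m=0}^{k−4} z^{k−4−2m}`. -/
noncomputable def wtilde (k : ℕ) (z : ℂ) : ℂ :=
  (z ^ (k : ℤ) + z ^ (-(k : ℤ)))
    + ((Real.pi : ℂ) ^ 2 / 6) * (z ^ ((k : ℤ) - 2) + z ^ (2 - (k : ℤ)))
    + 2 / (1 - (2 : ℂ) ^ (1 - 2 * (k : ℤ))) *
        ∑ m ∈ Finset.range (k - 3), z ^ ((k : ℤ) - 4 - 2 * (m : ℤ))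

noncomputable def Zr (j : ℕ) : ℝ := ∑' n : ℕ, 1 / (n : ℝ) ^ (2 * j)

noncomputable def etar (j : ℕ) : ℝ := (1 - 2 * (1/4 : ℝ) ^ j) * Zr j

noncomputable def br (j : ℕ) : ℝ :=
  (bernoulli (2 * j) : ℚ) * (1 - 2 * (1/4 : ℝ) ^ j) / (Nat.factorial (2 * j))

lemma Zr_hasSum {j : ℕ} (hj : j ≠ 0) : HasSum (fun n : ℕ => 1 / (n : ℝ) ^ (2 * j)) (Zr j) :=
  (hasSum_zeta_nat hj).summable.hasSum

lemma Zr_two : Zr 2 = Real.pi ^ 4 / 90 := by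
  have := hasSum_zeta_four.tsum_eq
  simpa [Zr] using this

lemma br_zero : br 0 = -1 := by simp [br]; norm_num

lemma br_eq {j : ℕ} (hj : j ≠ 0) :
    br j = (-1) ^ (j + 1) * 2 * etar j / (2 * Real.pi) ^ (2 * j) := by
  have h := (hasSum_zeta_nat hj).tsum_eq
  have hZ : Zr j = _ := h
  unfold br etar
  rw [hZ]
  obtain ⟨m, rfl⟩ := Nat.exists_eq_succ_of_ne_zero hj
  have hpi := Real.pi_ne_zero
  have hf : ((Nat.factorial (2 * m.succ) : ℕ) : ℝ) ≠ 0 := by positivity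
  have e : 2 * m.succ - 1 = 2 * m + 1 := by omega
  have s : ((-1 : ℝ) ^ (m.succ + 1)) * (-1 : ℝ) ^ (m.succ + 1) = 1 := by
    rw [← mul_pow]; norm_num
  rw [e, mul_pow]
  have e2 : (2 : ℝ) ^ (2 * m.succ) = 2 * 2 ^ (2 * m + 1) := by
    rw [← pow_succ']; rfl
  rw [e2]
  generalize ((-1 : ℝ) ^ (m.succ + 1)) = S at *
  generalize (1/4 : ℝ) ^ m.succ = X at *
  field_simp
  linear_combination (-(1 - 2 * X) * ((bernoulli (2 * m.succ) : ℚ) : ℝ)) * s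

lemma pi4_bounds : 97.408 < Real.pi ^ 4 ∧ Real.pi ^ 4 < 97.41 := by
  have h1 := Real.pi_gt_d6
  have h2 := Real.pi_lt_d6
  constructor
  · calc (97.408 : ℝ) < 3.141592 ^ 4 := by norm_num
      _ < _ := by gcongr
  · calc Real.pi ^ 4 < 3.141593 ^ 4 := by gcongr
      _ < _ := by norm_num

lemma Zr_upper {j : ℕ} (hj : 2 ≤ j) : Zr j ≤ 1 + (4/3) * (1/4 : ℝ) ^ j := by
  have h1 := Zr_hasSum (show j ≠ 0 by omega)
  have h2 := Zr_hasSum (show 2 ≠ 0 by omega)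
  have hs1 : HasSum (fun n : ℕ => if n = 1 then (1 : ℝ) else 0) 1 := hasSum_ite_eq 1 1
  have h3 := h1.sub hs1
  have h4 := (h2.sub hs1).mul_left (16 * (1/4 : ℝ) ^ j)
  have := hasSum_le (fun n => ?_) h3 h4
  · rw [Zr_two] at this
    have hp := pi4_bounds.2
    have hx : 0 < (1/4 : ℝ) ^ j := by positivity
    nlinarith
  · rcases n with _ | _ | n
    · simp [show j ≠ 0 by omega]
    · simp
    · obtain ⟨i, rfl⟩ := Nat.exists_eq_add_of_le hj
      simp only [show n + 1 + 1 ≠ 1 by omega, if_false, sub_zero]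
      have hb : (2 : ℝ) ≤ ((n + 1 + 1 : ℕ) : ℝ) := by push_cast; linarith [(Nat.cast_nonneg n : (0:ℝ) ≤ n)]
      generalize ((n + 1 + 1 : ℕ) : ℝ) = b at *
      have : (16 : ℝ) * (1/4) ^ (2 + i) = (1/4) ^ i := by
        rw [pow_add]; ring
      rw [this, mul_add, pow_add, pow_mul b 2 i, ← one_div_mul_one_div, mul_comm ((1/4:ℝ)^i)]
      have h5 : 1 / (b ^ 2) ^ i ≤ (1/4 : ℝ) ^ i := by
        rw [one_div_pow]
        apply one_div_le_one_div_of_le (by positivity)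
        gcongr
        nlinarith
      exact mul_le_mul_of_nonneg_left h5 (by positivity)

lemma Zr_lower {j : ℕ} (hj : 2 ≤ j) :
    1 + (1/4 : ℝ) ^ j + (1/9 : ℝ) ^ j + (1/16 : ℝ) ^ j ≤ Zr j := by
  have h1 := Zr_hasSum (show j ≠ 0 by omega)
  have := sum_le_hasSum (Finset.range 5) (fun n _ => by positivity) h1
  refine le_trans (le_of_eq ?_) this
  simp only [Finset.sum_range_succ, Finset.sum_range_zero, pow_mul, one_div_pow]
  norm_num [show j ≠ 0 by omega]

lemma Zr_one_le {j : ℕ} (hj : 2 ≤ j) : 1 ≤ Zr j := by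
  have := Zr_lower hj
  have : 0 < (1/4 : ℝ) ^ j + (1/9 : ℝ) ^ j + (1/16 : ℝ) ^ j := by positivity
  linarith

lemma quarter_le {j i : ℕ} (hj : i ≤ j) : (1/4 : ℝ) ^ j ≤ (1/4) ^ i :=
  pow_le_pow_of_le_one (by norm_num) (by norm_num) hj

lemma etar_le_one {j : ℕ} (hj : 2 ≤ j) : etar j ≤ 1 := by
  have h := Zr_upper hj
  have hx : 0 < (1/4 : ℝ) ^ j := by positivity
  have hx2 := quarter_le hj
  unfold etar
  nlinarith

lemma etar_ge {j : ℕ} (hj : 3 ≤ j) : 1 - (1/4 : ℝ) ^ j ≤ etar j := by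
  have h := Zr_lower (show 2 ≤ j by omega)
  have hx : 0 < (1/4 : ℝ) ^ j := by positivity
  have hy : 0 < (1/9 : ℝ) ^ j := by positivity
  have hx2 := quarter_le hj
  have h16 : (1/16 : ℝ) ^ j = ((1/4 : ℝ) ^ j) * (1/4) ^ j := by rw [← mul_pow]; norm_num
  have hq : (1/4 : ℝ) ^ j * (1/4) ^ j ≤ (1/4) * (1/9 : ℝ) ^ j := by
    have : (1/4 : ℝ) ^ j * (1/4) ^ j = (9/16) ^ j * (1/9) ^ j := by
      rw [← mul_pow, ← mul_pow]; norm_num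
    rw [this]
    gcongr
    calc (9/16 : ℝ) ^ j ≤ (9/16) ^ 3 := pow_le_pow_of_le_one (by norm_num) (by norm_num) hj
      _ ≤ _ := by norm_num
  rw [h16] at h
  unfold etar
  generalize (1/4 : ℝ) ^ j = x at *
  generalize (1/9 : ℝ) ^ j = y at *
  have h3 : 0 ≤ 1 - 2 * x := by norm_num at hx2; linarith
  have h4 := mul_le_mul_of_nonneg_left h h3
  norm_num at hx2
  nlinarith [mul_pos hx hy, mul_pos hx hx]

lemma etar_two_ge : 0.947 ≤ etar 2 := by
  unfold etar
  rw [Zr_two]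
  have := pi4_bounds.1
  norm_num
  linarith

lemma etar_pos {j : ℕ} (hj : 3 ≤ j) : 0 < etar j := by
  have h := etar_ge hj
  have hx2 := quarter_le hj
  norm_num at hx2
  linarith

lemma etar_nonneg {j : ℕ} (hj : 2 ≤ j) : 0 ≤ etar j := by
  rcases hj.eq_or_lt with rfl | h
  · linarith [etar_two_ge]
  · exact (etar_pos h).le

lemma sum_delta (n : ℕ) : ∑ i ∈ Finset.range (n + 1), (1 - etar (i + 2)) ≤ 0.053 + 1 / 48 := by
  rw [Finset.sum_range_succ']
  have h : ∀ n : ℕ, ∑ i ∈ Finset.range n, (1 - etar (i + 1 + 2)) ≤ 1 / 48 - (1/48) * (1/4) ^ n := by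
    intro n
    induction n with
    | zero => simp
    | succ n ih =>
      rw [Finset.sum_range_succ]
      have := etar_ge (show 3 ≤ n + 1 + 2 by omega)
      have e : (1/4 : ℝ) ^ (n + 1 + 2) = (1/64) * (1/4) ^ n := by ring
      rw [e] at this
      rw [pow_succ]
      linarith
  have h1 := h n
  have h2 := etar_two_ge
  have : 0 < (1/4 : ℝ) ^ n := by positivity
  simp only [zero_add]
  linarith

/-- normalized coefficients -/
noncomputable def rr (k j : ℕ) : ℝ := br j * br (k - j) / (br 0 * br k)

lemma rr_eq {k j : ℕ} (hk : 3 ≤ k) (hj : j ≠ 0) (hjk : j < k) :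
    rr k j = 2 * etar j * etar (k - j) / etar k := by
  obtain ⟨m, rfl⟩ := Nat.exists_eq_add_of_lt hjk
  have e : j + m + 1 - j = m + 1 := by omega
  have h0 := (etar_pos hk).ne'
  have hpi := Real.pi_ne_zero
  unfold rr
  rw [e, br_eq hj, br_eq (show m + 1 ≠ 0 by omega), br_eq (show j + m + 1 ≠ 0 by omega), br_zero]
  have s : (-1 : ℝ) ^ (j + m + 1 + 1) ≠ 0 := by positivity
  have s2 : (-1 : ℝ) ^ (j + 1) * (-1) ^ (m + 1 + 1) = - (-1) ^ (j + m + 1 + 1) := by ring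
  have p2 : (2 * Real.pi) ^ (2 * (j + m + 1))
     = (2 * Real.pi) ^ (2 * j) * (2 * Real.pi) ^ (2 * (m + 1)) := by rw [← pow_add]; ring_nf
  rw [p2]
  have q1 : (2 * Real.pi) ^ (2 * j) ≠ 0 := by positivity
  have q2 : (2 * Real.pi) ^ (2 * (m + 1)) ≠ 0 := by positivity
  generalize (2 * Real.pi) ^ (2 * j) = P at *
  generalize (2 * Real.pi) ^ (2 * (m + 1)) = Q at *
  generalize (-1 : ℝ) ^ (j + m + 1 + 1) = S at *
  generalize (-1 : ℝ) ^ (j + 1) = S1 at *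
  generalize (-1 : ℝ) ^ (m + 1 + 1) = S2 at *
  field_simp
  linear_combination (-(etar j * etar (m + 1))) * s2

lemma br_ne {k : ℕ} (hk : 3 ≤ k) : br k ≠ 0 := by
  have h0 := (etar_pos hk).ne'
  have hpi := Real.pi_ne_zero
  rw [br_eq (by omega)]
  positivity

lemma rr_zero {k : ℕ} (hk : 3 ≤ k) : rr k 0 = 1 := by
  have := br_ne hk
  unfold rr
  rw [br_zero]; simp [this]

lemma rr_self {k : ℕ} (hk : 3 ≤ k) : rr k k = 1 := by
  have := br_ne hk
  unfold rr
  rw [Nat.sub_self, br_zero]; simp [this]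

lemma two_zpow (j : ℕ) : (2 : ℂ) ^ (1 - 2 * (j : ℤ)) = ((2 * (1/4 : ℝ) ^ j : ℝ) : ℂ) := by
  rw [zpow_sub₀ two_ne_zero, zpow_mul]
  push_cast
  norm_num
  rw [div_pow, one_pow]
  ring

lemma W_eq {k : ℕ} (hk : 3 ≤ k) {z : ℂ} (hz : z ≠ 0) :
    z ^ (-(k : ℤ)) * Wfun k (Complex.I * z) / WA0 k
      = ∑ j ∈ Finset.range (k + 1), (rr k j : ℂ) * z ^ (2 * (j : ℤ) - k) := by
  have hb := br_ne hk
  have hpi := Real.pi_ne_zero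
  have hf : ((Nat.factorial (2 * k) : ℕ) : ℝ) ≠ 0 := by positivity
  set K : ℝ := (2 * Real.pi) ^ (2 * k - 1) * 2 ^ (2 * k) / (Nat.factorial (2 * k)) with hK
  have hK0 : K ≠ 0 := by positivity
  have hA : WA0 k = ((K * (br 0 * br k) * (Nat.factorial (2 * k)) : ℝ) : ℂ) := by
    unfold WA0
    rw [two_zpow, br_zero]
    unfold br
    rw [← hK]
    rw [show (((bernoulli (2 * k) : ℚ)) : ℂ) = ((((bernoulli (2 * k) : ℚ)) : ℝ) : ℂ) by push_cast; rfl]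
    norm_cast
    field_simp
    rw [Int.cast_negSucc]
    push_cast
    ring
  have hA0 : WA0 k ≠ 0 := by
    rw [hA, br_zero]
    norm_cast
    simp [hK0, hb, Nat.factorial_ne_zero]
  rw [div_eq_iff hA0, Finset.sum_mul]
  unfold Wfun
  rw [← hK, Finset.mul_sum, Finset.mul_sum]
  refine Finset.sum_congr rfl fun j hj => ?_
  have hjk : j ≤ k := by simpa [Nat.lt_succ_iff] using hj
  have hzz : z ^ (2 * (j : ℤ) - k) = z ^ (-(k : ℤ)) * z ^ (2 * j) := by
    rw [← zpow_natCast z (2 * j), ← zpow_add₀ hz]; congr 1; push_cast; ring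
  have hI : (-1 : ℂ) ^ j * (Complex.I * z) ^ (2 * j) = z ^ (2 * j) := by
    rw [mul_pow, pow_mul Complex.I, Complex.I_sq, ← mul_assoc, ← mul_pow]; norm_num
  have hc : ((Nat.choose (2 * k) (2 * j) : ℕ) : ℝ)
      = (Nat.factorial (2 * k)) / ((Nat.factorial (2 * j)) * (Nat.factorial (2 * (k - j)))) := by
    rw [Nat.cast_choose ℝ (show 2 * j ≤ 2 * k by omega), Nat.mul_sub]
  have e1 : (1 - 2 * (k : ℤ) + 2 * j) = 1 - 2 * ((k - j : ℕ) : ℤ) := by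
    push_cast [hjk]; ring
  have hreal : (K : ℂ) * (((bernoulli (2 * j) : ℚ) : ℂ) * ((bernoulli (2 * k - 2 * j) : ℚ) : ℂ)
        * (1 - (2 : ℂ) ^ (1 - 2 * (j : ℤ))) * (1 - (2 : ℂ) ^ (1 - 2 * (k : ℤ) + 2 * j))
        * ((Nat.choose (2 * k) (2 * j)) : ℂ)) = (rr k j : ℂ) * WA0 k := by
    rw [hA, e1, two_zpow, two_zpow, ← Nat.mul_sub]
    rw [show (((bernoulli (2 * j) : ℚ)) : ℂ) = ((((bernoulli (2 * j) : ℚ)) : ℝ) : ℂ) by push_cast; rfl]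
    rw [show (((bernoulli (2 * (k - j)) : ℚ)) : ℂ) = ((((bernoulli (2 * (k - j)) : ℚ)) : ℝ) : ℂ) by push_cast; rfl]
    rw [show ((Nat.choose (2 * k) (2 * j)) : ℂ) = (((Nat.choose (2 * k) (2 * j)) : ℝ) : ℂ) by push_cast; rfl]
    rw [hc, ← Complex.ofReal_one, ← Complex.ofReal_sub, ← Complex.ofReal_sub, ← Complex.ofReal_mul,
      ← Complex.ofReal_mul, ← Complex.ofReal_mul, ← Complex.ofReal_mul, ← Complex.ofReal_mul,
      ← Complex.ofReal_mul]
    congr 1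
    have : rr k j * (K * (br 0 * br k) * (Nat.factorial (2 * k)))
       = K * (br j * br (k - j)) * (Nat.factorial (2 * k)) := by
      unfold rr
      rw [br_zero]
      field_simp
    rw [this]
    unfold br
    field_simp
  rw [hzz]
  linear_combination (z ^ (-(k : ℤ)) * z ^ (2 * j)) * hreal + (z ^ (-(k : ℤ)) * (K : ℂ) * (((bernoulli (2 * j) : ℚ) : ℂ) * ((bernoulli (2 * k - 2 * j) : ℚ) : ℂ)
        * (1 - (2 : ℂ) ^ (1 - 2 * (j : ℤ))) * (1 - (2 : ℂ) ^ (1 - 2 * (k : ℤ) + 2 * j))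
        * ((Nat.choose (2 * k) (2 * j)) : ℂ))) * hI

lemma mid_bound {n i : ℕ} (hi : i ≤ n) :
    |rr (n + 4) (i + 2) - 2 / (1 - 2 * (1/4 : ℝ) ^ (n + 4))|
      ≤ 2 / etar (n + 4) * ((1 - etar (i + 2)) + (1 - etar (n - i + 2)) + (Zr (n + 4) - 1)) := by
  rw [rr_eq (by omega) (by omega) (by omega), show n + 4 - (i + 2) = n - i + 2 by omega]
  have hk := etar_pos (show 3 ≤ n + 4 by omega)
  have hZ := Zr_one_le (show 2 ≤ n + 4 by omega)
  have h1 := etar_le_one (show 2 ≤ i + 2 by omega)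
  have h2 := etar_le_one (show 2 ≤ n - i + 2 by omega)
  have h3 := etar_nonneg (show 2 ≤ i + 2 by omega)
  have h4 := etar_nonneg (show 2 ≤ n - i + 2 by omega)
  have hne : 1 - 2 * (1/4 : ℝ) ^ (n + 4) ≠ 0 := by
    intro h
    unfold etar at hk
    rw [h] at hk
    simp at hk
  have hc : 2 / (1 - 2 * (1/4 : ℝ) ^ (n + 4)) = 2 / etar (n + 4) * Zr (n + 4) := by
    have : Zr (n + 4) ≠ 0 := by linarith
    unfold etar
    field_simp
  rw [hc]
  have : 2 * etar (i + 2) * etar (n - i + 2) / etar (n + 4) - 2 / etar (n + 4) * Zr (n + 4)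
    = 2 / etar (n + 4) * (etar (i + 2) * etar (n - i + 2) - Zr (n + 4)) := by ring
  rw [this, abs_mul, abs_of_pos (by positivity)]
  gcongr
  rw [abs_le]
  constructor <;> nlinarith [mul_nonneg (sub_nonneg.2 h1) (sub_nonneg.2 h2)]

lemma mid_sum {n : ℕ} (hn : 3 ≤ n) :
    ∑ i ∈ Finset.range (n + 1), |rr (n + 4) (i + 2) - 2 / (1 - 2 * (1/4 : ℝ) ^ (n + 4))|
      ≤ 2 / etar (n + 4) * (2 * (0.053 + 1 / 48) + (4/3) * (1/4) ^ 6) := by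
  have hk := etar_pos (show 3 ≤ n + 4 by omega)
  calc _ ≤ ∑ i ∈ Finset.range (n + 1), 2 / etar (n + 4) * ((1 - etar (i + 2)) + (1 - etar (n - i + 2)) + (Zr (n + 4) - 1)) :=
        Finset.sum_le_sum fun i hi => mid_bound (by simpa [Nat.lt_succ_iff] using hi)
    _ ≤ _ := by
      rw [← Finset.mul_sum]
      gcongr
      rw [Finset.sum_add_distrib, Finset.sum_add_distrib, Finset.sum_const, Finset.card_range, nsmul_eq_mul]
      have hr := Finset.sum_range_reflect (fun i => 1 - etar (i + 2)) (n + 1)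
      simp only [Nat.add_sub_cancel] at hr
      rw [hr]
      have hd := sum_delta n
      have hZ := Zr_upper (show 2 ≤ n + 4 by omega)
      have hp : ∀ m : ℕ, ((m : ℝ) + 4) * (1/4) ^ (m + 7) ≤ (1/4) ^ 6 := by
        intro m
        induction m with
        | zero => norm_num
        | succ m ih =>
          refine le_trans ?_ ih
          have : 0 < (1/4 : ℝ) ^ (m + 7) := by positivity
          rw [show m + 1 + 7 = (m + 7) + 1 by ring, pow_succ]
          push_cast
          have : (0:ℝ) ≤ m := by positivity
          nlinarith
      have hp' := hp (n - 3)
      rw [show n - 3 + 7 = n + 4 by omega] at hp'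
      push_cast [hn] at hp'
      have : ((n + 1 : ℕ) : ℝ) * (Zr (n + 4) - 1) ≤ ((n + 1 : ℕ) : ℝ) * (4/3 * (1/4) ^ (n + 4)) := by
        gcongr
        linarith
      push_cast at this ⊢
      nlinarith

lemma etar_one : etar 1 = Real.pi ^ 2 / 12 := by
  have := hasSum_zeta_two.tsum_eq
  have h : Zr 1 = Real.pi ^ 2 / 6 := by simpa [Zr] using this
  unfold etar
  rw [h]; ring

lemma edge_bound {n : ℕ} (hn : 3 ≤ n) {r : ℝ}
    (hr : r = 2 * etar 1 * etar (n + 3) / etar (n + 4)) :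
    |r - Real.pi ^ 2 / 6| ≤ (1 / etar (n + 4)) * (1.65 * (1/4) ^ 6) := by
  have hk := etar_pos (show 3 ≤ n + 4 by omega)
  have : r - Real.pi ^ 2 / 6 = 1 / etar (n + 4) * (Real.pi ^ 2 / 6 * (etar (n + 3) - etar (n + 4))) := by
    rw [hr, etar_one]; field_simp; ring
  rw [this, abs_mul, abs_of_pos (by positivity), abs_mul, abs_of_pos (by positivity)]
  have hp : Real.pi ^ 2 / 6 ≤ 1.65 := by
    have := Real.pi_lt_d4
    have := Real.pi_pos
    nlinarith
  gcongr
  have h1 := etar_le_one (show 2 ≤ n + 4 by omega)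
  have h2 := etar_le_one (show 2 ≤ n + 3 by omega)
  have h3 := etar_ge (show 3 ≤ n + 4 by omega)
  have h4 := etar_ge (show 3 ≤ n + 3 by omega)
  have h5 := quarter_le (show 6 ≤ n + 3 by omega)
  have h6 := quarter_le (show 6 ≤ n + 4 by omega)
  rw [abs_le]
  constructor <;> linarith

/-- For `k ≥ 7` and every `z` on the unit circle,
`|z^{−k} W_k(iz)/A_0 − w̃_k(z)| < 0.3`. -/
theorem Wfun_close_to_wtilde (k : ℕ) (hk : 7 ≤ k) :
    ∀ z : ℂ, ‖z‖ = 1 →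
      ‖z ^ (-(k : ℤ)) * Wfun k (Complex.I * z) / WA0 k - wtilde k z‖
        < 0.3 := by
  intro z hz
  have hz0 : z ≠ 0 := by
    rintro rfl
    simp at hz
  obtain ⟨n, rfl⟩ : ∃ n, k = n + 4 := ⟨k - 4, by omega⟩
  have hn : 3 ≤ n := by omega
  rw [W_eq (by omega) hz0]
  have hw : wtilde (n + 4) z = (z ^ ((n + 4 : ℕ) : ℤ) + z ^ (-((n + 4 : ℕ) : ℤ)))
    + ((Real.pi ^ 2 / 6 : ℝ) : ℂ) * (z ^ (((n + 4 : ℕ) : ℤ) - 2) + z ^ (2 - ((n + 4 : ℕ) : ℤ)))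
    + ∑ i ∈ Finset.range (n + 1), ((2 / (1 - 2 * (1/4 : ℝ) ^ (n + 4)) : ℝ) : ℂ)
        * z ^ (2 * ((i + 2 : ℕ) : ℤ) - ((n + 4 : ℕ) : ℤ)) := by
    unfold wtilde
    rw [two_zpow, ← Finset.mul_sum, ← Finset.sum_range_reflect, show n + 4 - 3 = n + 1 by omega]
    congr 1
    · push_cast; rfl
    · congr 1
      · push_cast; rfl
      · refine Finset.sum_congr rfl fun i hi => ?_
        have : i ≤ n := by simpa [Nat.lt_succ_iff] using hi
        congr 1
        push_cast [show n + 1 - 1 - i = n - i by omega, this]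
        ring
  have hs : ∑ j ∈ Finset.range (n + 4 + 1), (rr (n + 4) j : ℂ) * z ^ (2 * (j : ℤ) - ((n + 4 : ℕ) : ℤ))
     = (z ^ ((n + 4 : ℕ) : ℤ) + z ^ (-((n + 4 : ℕ) : ℤ)))
      + ((rr (n + 4) (n + 3) : ℂ) * z ^ (((n + 4 : ℕ) : ℤ) - 2) + (rr (n + 4) 1 : ℂ) * z ^ (2 - ((n + 4 : ℕ) : ℤ)))
      + ∑ i ∈ Finset.range (n + 1), (rr (n + 4) (i + 2) : ℂ) * z ^ (2 * ((i + 2 : ℕ) : ℤ) - ((n + 4 : ℕ) : ℤ)) := by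
    rw [Finset.sum_range_succ, Finset.sum_range_succ, Finset.sum_range_succ', Finset.sum_range_succ']
    rw [rr_zero (by omega), rr_self (by omega)]
    have e1 : 2 * ((n + 4 : ℕ) : ℤ) - ((n + 4 : ℕ) : ℤ) = ((n + 4 : ℕ) : ℤ) := by ring
    have e2 : 2 * ((n + 3 : ℕ) : ℤ) - ((n + 4 : ℕ) : ℤ) = ((n + 4 : ℕ) : ℤ) - 2 := by push_cast; ring
    have e3 : 2 * ((0 : ℕ) : ℤ) - ((n + 4 : ℕ) : ℤ) = -((n + 4 : ℕ) : ℤ) := by push_cast; ring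
    have e4 : 2 * ((0 + 1 : ℕ) : ℤ) - ((n + 4 : ℕ) : ℤ) = 2 - ((n + 4 : ℕ) : ℤ) := by push_cast; ring
    rw [e1, e2, e3, e4]
    simp only [zero_add, Complex.ofReal_one, one_mul, add_assoc, Nat.reduceAdd]
    ring
  rw [hs, hw]
  have hnz : ∀ m : ℤ, ‖z ^ m‖ = 1 := fun m => by rw [norm_zpow, hz, one_zpow]
  have hd : ∀ S1 S2 a b c A B D E : ℂ, ((A + B) + (a * D + b * E) + S1) - ((A + B) + c * (D + E) + S2)
     = (a - c) * D + (b - c) * E + (S1 - S2) := by intros; ring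
  rw [hd, ← Finset.sum_sub_distrib]
  have hterm : ∀ (a b : ℝ) (m : ℤ), ‖((a : ℂ) - (b : ℂ)) * z ^ m‖ = |a - b| := by
    intro a b m
    rw [norm_mul, hnz, mul_one, ← Complex.ofReal_sub, Complex.norm_real, Real.norm_eq_abs]
  have b1 := edge_bound (r := rr (n + 4) 1) hn (rr_eq (by omega) (by omega) (by omega))
  have b2 := edge_bound (r := rr (n + 4) (n + 3)) hn (by
    rw [rr_eq (by omega) (by omega) (by omega), show n + 4 - (n + 3) = 1 by omega]; ring)
  have b3 := mid_sum hn
  have hE : 1 / etar (n + 4) ≤ 1.001 := by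
    have h := etar_ge (show 3 ≤ n + 4 by omega)
    have h6 := quarter_le (show 6 ≤ n + 4 by omega)
    norm_num at h6
    rw [div_le_iff₀ (etar_pos (by omega))]
    norm_num at h ⊢
    linarith
  refine lt_of_le_of_lt (norm_add₃_le) ?_
  rw [hterm, hterm]
  have b4 : ‖∑ i ∈ Finset.range (n + 1), ((rr (n + 4) (i + 2) : ℂ) * z ^ (2 * ((i + 2 : ℕ) : ℤ) - ((n + 4 : ℕ) : ℤ))
      - ((2 / (1 - 2 * (1/4 : ℝ) ^ (n + 4)) : ℝ) : ℂ)
        * z ^ (2 * ((i + 2 : ℕ) : ℤ) - ((n + 4 : ℕ) : ℤ)))‖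
      ≤ ∑ i ∈ Finset.range (n + 1), |rr (n + 4) (i + 2) - 2 / (1 - 2 * (1/4 : ℝ) ^ (n + 4))| := by
    refine (norm_sum_le _ _).trans (le_of_eq (Finset.sum_congr rfl fun i _ => ?_))
    rw [← sub_mul, hterm]
  have e : 2 / etar (n + 4) = 2 * (1 / etar (n + 4)) := by ring
  rw [e] at b3
  generalize 1 / etar (n + 4) = q at *
  norm_num at b1 b2 b3 hE b4 ⊢
  linarith
end

section
/- Let k ≥ 2 be an integer, and let A_0, A_1, …, A_{4k} be the real coefficients determined by the polynomial identity ∑_{j=0}^{4k} A_j z^j = ((2/π) ∑_{j=0}^{k} ζ(2j) ζ(2k−2j) z^{2j})² + ζ(2k−1)² (z^{2k−1} − z)², where ζ(0) = −1/2 and ζ(2j) = ∑_{n=1}^∞ n^{−2j} for j ≥ 1. Then 4k(k−1)|A_{4k}| = ∑_{j=0}^{4k} |A_{4k} − A_j|. -/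
/-- `zetaVal m = ∑_{n=1}^∞ n^{−m}`, the value of the Riemann zeta function
at the integer `m`. -/
noncomputable def zetaVal (m : ℕ) : ℝ := ∑' n : ℕ, 1 / ((n : ℝ) + 1) ^ m

/-- `ζ` extended so that `ζ(0) = −1/2`. -/
noncomputable def zetaVal' (m : ℕ) : ℝ := if m = 0 then -(1 / 2) else zetaVal m

/-- The polynomial `∑_{j=0}^{4k} A_j z^j
= ((2/π) ∑_{j=0}^{k} ζ(2j) ζ(2k−2j) z^{2j})² + ζ(2k−1)² (z^{2k−1} − z)²`,
which equals `|P_k(iz)|²` for real `z`. -/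
noncomputable def absPpoly (k : ℕ) : Polynomial ℝ :=
  (Polynomial.C (2 / Real.pi) *
      ∑ j ∈ Finset.range (k + 1),
        Polynomial.C (zetaVal' (2 * j) * zetaVal' (2 * k - 2 * j)) * Polynomial.X ^ (2 * j)) ^ 2
    + Polynomial.C ((zetaVal (2 * k - 1)) ^ 2)
        * (Polynomial.X ^ (2 * k - 1) - Polynomial.X) ^ 2


section
open Finset

theorem aux_bern_ps :
    (bernoulliPowerSeries ℚ)^2 = bernoulliPowerSeries ℚ - PowerSeries.X * bernoulliPowerSeries ℚ
      - PowerSeries.X * PowerSeries.derivative ℚ (bernoulliPowerSeries ℚ) := by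
  have h := bernoulliPowerSeries_mul_exp_sub_one ℚ
  have h2 := congrArg (PowerSeries.derivative ℚ) h
  simp only [Derivation.leibniz, map_sub, PowerSeries.derivative_exp, smul_eq_mul, PowerSeries.derivative_X, Derivation.map_one_eq_zero, sub_zero] at h2
  linear_combination (bernoulliPowerSeries ℚ) * h2 - (bernoulliPowerSeries ℚ) * h - PowerSeries.derivative ℚ (bernoulliPowerSeries ℚ) * h

theorem aux_summable {m : ℕ} (hm : 2 ≤ m) : Summable (fun n : ℕ => 1 / ((n : ℝ) + 1) ^ m) := by
  have := (summable_nat_add_iff 1).2 (Real.summable_one_div_nat_pow.2 (show 1 < m by omega))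
  simpa using this

theorem aux_partial {m : ℕ} (hm : 2 ≤ m) (N : ℕ) :
    ∑ n ∈ range N, 1 / ((n : ℝ) + 1) ^ m ≤ zetaVal m :=
  (aux_summable hm).sum_le_tsum _ (fun i _ => by positivity)

theorem aux_one_le {m : ℕ} (hm : 2 ≤ m) : 1 ≤ zetaVal m := by
  simpa using aux_partial hm 1

theorem aux_anti {m n : ℕ} (hm : 2 ≤ m) (h : m ≤ n) : zetaVal n ≤ zetaVal m := by
  refine (aux_summable (hm.trans h)).tsum_le_tsum (fun i => ?_) (aux_summable hm)
  gcongr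
  linarith [(Nat.cast_nonneg i : (0:ℝ) ≤ i)]

theorem aux_hasSum {m : ℕ} {a : ℝ} (hm : 2 ≤ m) (h : HasSum (fun n : ℕ => 1 / (n : ℝ) ^ m) a) :
    zetaVal m = a := by
  have := (hasSum_nat_add_iff' 1).2 h
  have h0 : m ≠ 0 := by omega
  simp [h0] at this
  rw [zetaVal, ← this.tsum_eq]
  simp

theorem aux_z2 : zetaVal 2 = Real.pi ^ 2 / 6 := aux_hasSum le_rfl hasSum_zeta_two
theorem aux_z4 : zetaVal 4 = Real.pi ^ 4 / 90 := aux_hasSum (by norm_num) hasSum_zeta_four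

theorem aux_zeven (j : ℕ) : zetaVal' (2 * j) =
    (-1) ^ (j + 1) * (2 * Real.pi) ^ (2 * j) / 2 * ((bernoulli (2 * j) : ℝ) / (2 * j).factorial) := by
  rcases Nat.eq_zero_or_pos j with rfl | hj
  · norm_num [zetaVal']
  · rw [zetaVal', if_neg (by omega), aux_hasSum (by omega) (hasSum_zeta_nat (by omega : j ≠ 0))]
    rw [mul_pow]
    have : (2:ℝ) ^ (2 * j) = 2 ^ (2 * j - 1) * 2 := by rw [← pow_succ]; congr 1; omega
    rw [this]; ring

theorem aux_z3_up : zetaVal 3 ≤ 1 + ((zetaVal 2 - 1) / 3 + 3 * (zetaVal 4 - 1)) / 2 := by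
  have h2 := aux_summable (m := 2) le_rfl
  have h3 := aux_summable (m := 3) (by norm_num)
  have h4 := aux_summable (m := 4) (by norm_num)
  have H := ((h2.hasSum.mul_left (1/3)).add (h4.hasSum.mul_left 3)).sub (h3.hasSum.mul_left 2)
  have := H.summable.sum_le_tsum (range 1) (fun i _ => by
    have : (0:ℝ) < (i:ℝ) + 1 := by positivity
    have e : 1 / 3 * (1 / ((i:ℝ) + 1) ^ 2) + 3 * (1 / ((i:ℝ) + 1) ^ 4) - 2 * (1 / ((i:ℝ) + 1) ^ 3)
      = 1 / 3 * ((1 / ((i:ℝ) + 1)) * (1 - 3 / ((i:ℝ) + 1)))^2 := by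
      field_simp; ring
    rw [e]; positivity)
  rw [H.tsum_eq] at this
  simp only [range_one, sum_singleton] at this
  change _ ≤ 1 / 3 * zetaVal 2 + 3 * zetaVal 4 - 2 * zetaVal 3 at this
  norm_num at this
  linarith

theorem aux_split {M : Type*} [AddCommMonoid M] (f : ℕ → M) (n : ℕ) :
    ∑ j ∈ range (2 * n + 1), f j = ∑ m ∈ range (n + 1), f (2 * m) + ∑ m ∈ range n, f (2 * m + 1) := by
  induction n with
  | zero => simp
  | succ n ih =>
    rw [show 2 * (n + 1) + 1 = 2 * n + 1 + 1 + 1 by ring, sum_range_succ, sum_range_succ, ih,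
      sum_range_succ _ (n+1), sum_range_succ _ n, show 2 * (n + 1) = 2 * n + 1 + 1 by ring,
      sum_range_succ (fun m => f (2 * m + 1)) n]
    abel

theorem aux_bern_conv (n : ℕ) :
    ∑ i ∈ range (n + 2), (bernoulli i / i.factorial : ℚ) * (bernoulli (n + 1 - i) / (n + 1 - i).factorial)
     = (bernoulli (n + 1) / (n + 1).factorial) - bernoulli n / n.factorial
       - (n + 1) * (bernoulli (n + 1) / (n + 1).factorial) := by
  have h := congrArg (PowerSeries.coeff (n + 1)) aux_bern_ps
  rw [sq, PowerSeries.coeff_mul, Finset.Nat.sum_antidiagonal_eq_sum_range_succ_mk, map_sub, map_sub,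
    PowerSeries.coeff_succ_X_mul, PowerSeries.coeff_succ_X_mul, PowerSeries.coeff_derivative] at h
  simp only [bernoulliPowerSeries, PowerSeries.coeff_mk, Algebra.algebraMap_self, RingHom.id_apply] at h
  rw [h]
  ring

theorem aux_bern_even (k : ℕ) (hk : 2 ≤ k) :
    ∑ j ∈ range (k + 1), (bernoulli (2 * j) / (2 * j).factorial : ℚ) *
        (bernoulli (2 * k - 2 * j) / (2 * k - 2 * j).factorial)
     = (1 - 2 * k) * (bernoulli (2 * k) / (2 * k).factorial) := by
  have h := aux_bern_conv (2 * k - 1)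
  rw [show 2 * k - 1 + 2 = 2 * k + 1 by omega, show 2 * k - 1 + 1 = 2 * k by omega, aux_split,
    bernoulli_eq_zero_of_odd (n := 2 * k - 1) ⟨k - 1, by omega⟩ (by omega)] at h
  rw [sum_eq_zero (s := range k), Nat.cast_sub (by omega)] at h
  · rw [← add_zero (∑ j ∈ range (k+1), _), h]; push_cast; ring
  · intro m hm
    have := mem_range.1 hm
    rcases Nat.eq_zero_or_pos m with rfl | h0
    · rw [bernoulli_eq_zero_of_odd (n := 2 * k - (2 * 0 + 1)) ⟨k - 1, by omega⟩ (by omega)]; simp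
    · rw [bernoulli_eq_zero_of_odd (n := 2 * m + 1) ⟨m, rfl⟩ (by omega)]; simp

/-- the coefficients -/
noncomputable def auxC (k j : ℕ) : ℝ := zetaVal' (2 * j) * zetaVal' (2 * k - 2 * j)

theorem aux_sumC (k : ℕ) (hk : 2 ≤ k) :
    ∑ j ∈ range (k + 1), auxC k j = (k - 1 / 2) * zetaVal (2 * k) := by
  have h : ((∑ j ∈ range (k + 1), (bernoulli (2 * j) / (2 * j).factorial : ℚ) *
        (bernoulli (2 * k - 2 * j) / (2 * k - 2 * j).factorial) : ℚ) : ℝ)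
     = (((1 - 2 * k) * (bernoulli (2 * k) / (2 * k).factorial) : ℚ) : ℝ) := by
    rw [aux_bern_even k hk]
  push_cast at h
  have hz : zetaVal (2 * k) = zetaVal' (2 * k) := by rw [zetaVal', if_neg (by omega)]
  have e : ∀ j ∈ range (k + 1), auxC k j = (-1) ^ k * (2 * Real.pi) ^ (2 * k) / 4 *
      ((bernoulli (2 * j) / (2 * j).factorial : ℝ) *
        (bernoulli (2 * k - 2 * j) / (2 * k - 2 * j).factorial)) := by
    intro j hj
    obtain ⟨d, rfl⟩ := Nat.exists_eq_add_of_le (Nat.lt_succ_iff.1 (mem_range.1 hj))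
    rw [auxC, show 2 * (j + d) - 2 * j = 2 * d by omega, aux_zeven, aux_zeven]
    ring
  rw [sum_congr rfl e, ← mul_sum, h, hz, aux_zeven]
  ring

theorem auxC_zero (k : ℕ) (hk : 1 ≤ k) : auxC k 0 = - zetaVal (2 * k) / 2 := by
  simp [auxC, zetaVal', show k ≠ 0 by omega]; ring

theorem auxC_symm (k j : ℕ) (hj : j ≤ k) : auxC k (k - j) = auxC k j := by
  rw [auxC, auxC, mul_comm]; congr 2 <;> omega

theorem auxC_mid (k j : ℕ) (h1 : 1 ≤ j) (h2 : j < k) :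
    auxC k j = zetaVal (2 * j) * zetaVal (2 * k - 2 * j) := by
  rw [auxC, zetaVal', zetaVal', if_neg (by omega), if_neg (by omega)]

theorem auxC_pos (k j : ℕ) (h1 : 1 ≤ j) (h2 : j < k) : 0 < auxC k j := by
  rw [auxC_mid k j h1 h2]
  have := aux_one_le (m := 2 * j) (by omega)
  have := aux_one_le (m := 2 * k - 2 * j) (by omega)
  positivity

/-- convolution -/
noncomputable def auxT (k m : ℕ) : ℝ := ∑ i ∈ range (m + 1), auxC k i * auxC k (m - i)

theorem auxT_succ (k n : ℕ) (hk : 1 ≤ k) : auxT k (n + 1) =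
    - zetaVal (2 * k) * auxC k (n + 1) + ∑ i ∈ range n, auxC k (i + 1) * auxC k (n - i) := by
  rw [auxT, sum_range_succ, sum_range_succ']
  simp [auxC_zero k hk]; ring

theorem aux_z2_bd : 1.644 < zetaVal 2 ∧ zetaVal 2 < 1.65 := by
  have h1 := Real.pi_gt_d4
  have h2 := Real.pi_lt_d4
  rw [aux_z2]
  constructor <;> nlinarith

theorem aux_z4_eq : zetaVal 4 = 2 / 5 * zetaVal 2 ^ 2 := by
  rw [aux_z2, aux_z4]; ring

theorem aux_pi : Real.pi ^ 2 = 6 * zetaVal 2 := by rw [aux_z2]; ring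

theorem aux_z4_bd : 1.08 < zetaVal 4 ∧ zetaVal 4 < 1.09 := by
  have h1 := aux_z2_bd
  rw [aux_z4_eq]
  constructor <;> nlinarith [h1.1, h1.2]

theorem aux_z3_bd : 1.16 < zetaVal 3 ∧ zetaVal 3 < 1.235 := by
  have h1 := Real.pi_gt_d4
  have h2 := Real.pi_lt_d4
  have hz : zetaVal 2 < 1.645 := by rw [aux_z2]; nlinarith
  have h := aux_partial (m := 3) (by norm_num) 3
  have h' := aux_z3_up
  rw [aux_z4_eq] at h'
  norm_num [sum_range_succ] at h
  constructor
  · linarith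
  · nlinarith [aux_z2_bd.1]

theorem aux_m1 (k : ℕ) (hk : 2 ≤ k) :
    zetaVal (2 * k) ^ 2 ≤ 4 * auxT k 1 + Real.pi ^ 2 * zetaVal (2 * k - 1) ^ 2 := by
  rw [show 1 = 0 + 1 by rfl, auxT_succ k 0 (by omega), auxC_mid k (0 + 1) (by omega) (by omega), aux_pi]
  simp only [range_zero, sum_empty, zero_add, mul_one]
  obtain ⟨p1, p2⟩ := aux_z2_bd
  obtain ⟨q1, q2⟩ := aux_z4_bd
  obtain ⟨r1, r2⟩ := aux_z3_bd
  rcases hk.eq_or_lt with rfl | hk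
  · norm_num
    nlinarith [mul_pos (show 0 < zetaVal 2 by linarith) (show 0 < zetaVal 2 by linarith)]
  · have h1 := aux_one_le (m := 2 * k) (by omega)
    have h2 := aux_anti (m := 2 * k - 1) (n := 2 * k) (by omega) (by omega)
    have h3 := aux_anti (m := 4) (n := 2 * k - 2) (by omega) (by omega)
    have h4 := aux_one_le (m := 2 * k - 2) (by omega)
    have h5 := aux_anti (m := 4) (n := 2 * k) (by omega) (by omega)
    set a := zetaVal (2 * k)
    set s := zetaVal (2 * k - 1)
    set t := zetaVal (2 * k - 2)
    set w := zetaVal 2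
    have e1 : a ^ 2 ≤ w * (a * 1.09) := by
      have : a * a ≤ a * 1.09 := by gcongr; linarith
      have : 1 * (a * 1.09) ≤ w * (a * 1.09) := by gcongr; linarith
      linarith
    have e2 : w * (a * t) ≤ w * (a * 1.09) := by gcongr; linarith
    have h6 : 1 ≤ s := by linarith
    have e3 : w * (a * 1) ≤ w * s ^ 2 := by rw [sq]; gcongr
    have : 0 < w * a := by positivity
    nlinarith

theorem aux_mk (k : ℕ) (hk : 2 ≤ k) :
    zetaVal (2 * k) ^ 2 ≤ 4 * auxT k k - 2 * Real.pi ^ 2 * zetaVal (2 * k - 1) ^ 2 := by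
  obtain ⟨n, rfl⟩ : ∃ n, k = n + 1 := ⟨k - 1, by omega⟩
  rw [auxT_succ _ n (by omega), aux_pi]
  have hc : auxC (n + 1) (n + 1) = - zetaVal (2 * (n + 1)) / 2 := by
    rw [← auxC_zero _ (by omega), ← auxC_symm _ 0 (by omega)]; simp
  rw [hc]
  obtain ⟨p1, p2⟩ := aux_z2_bd
  obtain ⟨q1, q2⟩ := aux_z4_bd
  obtain ⟨r1, r2⟩ := aux_z3_bd
  rcases hk.eq_or_lt with h | hk
  · obtain rfl : n = 1 := by omega
    simp only [range_one, sum_singleton]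
    rw [auxC_mid _ _ (by omega) (by omega)]
    norm_num
    have : zetaVal 2 ^ 3 > 1.644 ^ 3 := by gcongr
    have : zetaVal 3 ^ 2 < 1.235 ^ 2 := by gcongr
    have e : zetaVal 2 * zetaVal 2 * (zetaVal 2 * zetaVal 2) = zetaVal 2 * zetaVal 2 ^ 3 := by ring
    rw [e]
    have h4 : zetaVal 4 ^ 2 > 1.08 ^ 2 := by gcongr
    have h5 : zetaVal 2 * (4 * zetaVal 2 ^ 3 - 12 * zetaVal 3 ^ 2) ≥ 1.65 * (-0.6) := by nlinarith
    nlinarith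
  · have hs : 2 * auxC (n + 1) 1 ^ 2 ≤ ∑ i ∈ range n, auxC (n + 1) (i + 1) * auxC (n + 1) (n - i) := by
      have h := sum_le_sum_of_subset_of_nonneg (s := {0, n - 1}) (t := range n)
        (f := fun i => auxC (n + 1) (i + 1) * auxC (n + 1) (n - i)) (by
          intro x hx; simp at hx ⊢; omega) (by
          intro i hi _
          have := mem_range.1 hi
          exact (mul_pos (auxC_pos _ _ (by omega) (by omega)) (auxC_pos _ _ (by omega) (by omega))).le)
      rw [sum_pair (by omega)] at h
      have e1 : auxC (n + 1) n = auxC (n + 1) 1 := auxC_symm (n + 1) 1 (by omega)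
      simp only [show n - 1 + 1 = n by omega, show n - (n - 1) = 1 by omega, Nat.sub_zero, zero_add, e1] at h
      linarith
    rw [auxC_mid _ 1 (by omega) (by omega)] at hs
    have h1 := aux_one_le (m := 2 * (n + 1) - 1) (by omega)
    have h2 := aux_anti (m := 2 * (n + 1) - 2 * 1) (n := 2 * (n + 1) - 1) (by omega) (by omega)
    have h3 : zetaVal (2 * (n + 1) - 1) ^ 2 ≤ zetaVal (2 * (n + 1) - 2 * 1) ^ 2 := by gcongr
    have h4 : zetaVal 2 ^ 2 * zetaVal (2 * (n + 1) - 1) ^ 2 ≤ zetaVal 2 ^ 2 * zetaVal (2 * (n + 1) - 2 * 1) ^ 2 := by gcongr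
    have h5 : zetaVal 2 * (1.644 * zetaVal (2 * (n + 1) - 1) ^ 2) ≤ zetaVal 2 * (zetaVal 2 * zetaVal (2 * (n + 1) - 1) ^ 2) := by
      gcongr
    have h6 : 0 ≤ zetaVal 2 * zetaVal (2 * (n + 1) - 1) ^ 2 := by positivity
    simp only [mul_one] at *
    nlinarith [sq_nonneg (zetaVal (2 * (n + 1)))]

theorem aux_mm (k m : ℕ) (hm : 2 ≤ m) (hmk : m < k) :
    zetaVal (2 * k) ^ 2 ≤ 4 * auxT k m := by
  obtain ⟨n, rfl⟩ : ∃ n, m = n + 1 := ⟨m - 1, by omega⟩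
  rw [auxT_succ _ n (by omega), auxC_mid k (n + 1) (by omega) (by omega)]
  obtain ⟨p1, p2⟩ := aux_z2_bd
  obtain ⟨q1, q2⟩ := aux_z4_bd
  have a1 := aux_one_le (m := 2 * k) (by omega)
  have a2 := aux_anti (m := 4) (n := 2 * k) (by omega) (by omega)
  have b1 := aux_one_le (m := 2 * k - 2) (by omega)
  have b2 := aux_anti (m := 2 * k - 2) (n := 2 * k) (by omega) (by omega)
  have d1 := aux_one_le (m := 2 * k - 2 * (n + 1)) (by omega)
  have d2 := aux_anti (m := 2) (n := 2 * k - 2 * (n + 1)) (by omega) (by omega)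
  have c1 : auxC k 1 = zetaVal 2 * zetaVal (2 * k - 2) := by
    rw [auxC_mid k 1 (by omega) (by omega)]
  rcases hm.eq_or_lt with h | hm
  · obtain rfl : n = 1 := by omega
    simp only [range_one, sum_singleton, zero_add, Nat.sub_zero, Nat.reduceAdd, Nat.reduceMul] at *
    rw [c1]
    set a := zetaVal (2 * k)
    set t := zetaVal (2 * k - 2)
    set u := zetaVal (2 * k - 4)
    set w := zetaVal 2
    have e1 : a * (zetaVal 4 * u) ≤ a * (1.09 * 1.65) := by
      gcongr; linarith
    have e2 : 1.644 * 1 * (1.644 * a) ≤ w * t * (w * t) := by gcongr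
    nlinarith
  · have hs : 2 * (auxC k 1 * auxC k n) ≤ ∑ i ∈ range n, auxC k (i + 1) * auxC k (n - i) := by
      have h := sum_le_sum_of_subset_of_nonneg (s := {0, n - 1}) (t := range n)
        (f := fun i => auxC k (i + 1) * auxC k (n - i)) (by
          intro x hx; simp at hx ⊢; omega) (by
          intro i hi _
          have := mem_range.1 hi
          exact (mul_pos (auxC_pos _ _ (by omega) (by omega)) (auxC_pos _ _ (by omega) (by omega))).le)
      rw [sum_pair (by omega)] at h
      simp only [show n - 1 + 1 = n by omega, show n - (n - 1) = 1 by omega, Nat.sub_zero, zero_add] at h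
      linarith
    rw [c1, auxC_mid k n (by omega) (by omega)] at hs
    have g1 := aux_one_le (m := 2 * (n + 1)) (by omega)
    have g2 := aux_anti (m := 2 * n) (n := 2 * (n + 1)) (by omega) (by omega)
    have f1 := aux_one_le (m := 2 * k - 2 * n) (by omega)
    set a := zetaVal (2 * k)
    set t := zetaVal (2 * k - 2)
    set u := zetaVal (2 * k - 2 * (n + 1))
    set w := zetaVal 2
    set g := zetaVal (2 * (n + 1))
    have e1 : a * (g * u) ≤ a * (g * w) := by gcongr
    have g3 : 1 ≤ zetaVal (2 * n) := by linarith
    have e2 : w * a * (g * 1) ≤ w * t * (zetaVal (2 * n) * zetaVal (2 * k - 2 * n)) := by gcongr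
    have e3 : a * 1.09 ≤ a * (g * w) := by
      have : 1 * 1.09 ≤ g * w := by gcongr; linarith
      gcongr; linarith
    nlinarith

open Polynomial in
/-- half polynomial -/
noncomputable def auxQ (k : ℕ) : ℝ[X] := ∑ j ∈ range (k + 1), C (auxC k j) * X ^ j

open Polynomial in
/-- half polynomial -/
noncomputable def auxR (k : ℕ) : ℝ[X] :=
  C (4 / Real.pi ^ 2) * (auxQ k * auxQ k) +
    C (zetaVal (2 * k - 1) ^ 2) * (X ^ (2 * k - 1) - C 2 * X ^ k + X ^ 1)

open Polynomial in
theorem aux_expand (k : ℕ) (hk : 2 ≤ k) : absPpoly k = expand ℝ 2 (auxR k) := by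
  have e1 : expand ℝ 2 (auxQ k) = ∑ j ∈ range (k + 1),
        C (zetaVal' (2 * j) * zetaVal' (2 * k - 2 * j)) * X ^ (2 * j) := by
    simp only [auxQ, map_sum, map_mul, expand_C, map_pow, expand_X, ← pow_mul, auxC]
  have e2 : (C (4 / Real.pi ^ 2) : ℝ[X]) = C (2 / Real.pi) ^ 2 := by
    rw [← C_pow]; congr 1; ring
  rw [absPpoly, ← e1, auxR, e2]
  simp only [map_add, map_mul, map_sub, map_pow, expand_C, expand_X]
  obtain ⟨n, rfl⟩ : ∃ n, k = n + 1 := ⟨k - 1, by omega⟩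
  rw [show 2 * (n + 1) - 1 = 2 * n + 1 by omega, show (C 2 : ℝ[X]) = 2 by rfl]
  ring

open Polynomial in
theorem auxQ_coeff (k m : ℕ) : (auxQ k).coeff m = if m ≤ k then auxC k m else 0 := by
  rw [auxQ, finsetSum_coeff]
  simp only [coeff_C_mul, coeff_X_pow, mul_ite, mul_one, mul_zero, sum_ite_eq, mem_range, Nat.lt_succ_iff]

open Polynomial in
theorem auxQ_deg (k : ℕ) : (auxQ k).natDegree ≤ k := by
  rw [natDegree_le_iff_coeff_eq_zero]
  intro N hN
  rw [auxQ_coeff, if_neg (by omega)]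

open Polynomial in
theorem auxQQ_symm (k m : ℕ) (hm : m ≤ 2 * k) :
    (auxQ k * auxQ k).coeff (2 * k - m) = (auxQ k * auxQ k).coeff m := by
  have h : reflect k (auxQ k) = auxQ k := by
    ext i
    rw [coeff_reflect]
    by_cases hi : i ≤ k
    · rw [revAt_le hi, auxQ_coeff, auxQ_coeff, if_pos hi, if_pos (by omega), auxC_symm k i hi]
    · rw [revAt_eq_self_of_lt (by omega)]
  have h2 := reflect_mul (auxQ k) (auxQ k) (auxQ_deg k) (auxQ_deg k)
  rw [h, ← two_mul] at h2
  rw [← revAt_le hm, ← coeff_reflect, h2]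

open Polynomial in
theorem auxQQ_coeff (k m : ℕ) (hm : m ≤ k) : (auxQ k * auxQ k).coeff m = auxT k m := by
  rw [coeff_mul, Finset.Nat.sum_antidiagonal_eq_sum_range_succ_mk, auxT]
  refine sum_congr rfl fun i hi => ?_
  have := mem_range.1 hi
  rw [auxQ_coeff, auxQ_coeff, if_pos (by omega), if_pos (by omega)]

open Polynomial in
theorem auxR_coeff (k m : ℕ) : (auxR k).coeff m = 4 / Real.pi ^ 2 * (auxQ k * auxQ k).coeff m
    + zetaVal (2 * k - 1) ^ 2 * ((if m = 2 * k - 1 then 1 else 0) - 2 * (if m = k then 1 else 0)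
      + if m = 1 then 1 else 0) := by
  simp only [auxR, coeff_add, coeff_C_mul, coeff_sub, coeff_X_pow]

theorem auxR_symm (k m : ℕ) (hk : 2 ≤ k) (hm : m ≤ 2 * k) :
    (auxR k).coeff (2 * k - m) = (auxR k).coeff m := by
  rw [auxR_coeff, auxR_coeff, auxQQ_symm k m hm]
  have e1 : (2 * k - m = 2 * k - 1) = (m = 1) := propext (by omega)
  have e2 : (2 * k - m = k) = (m = k) := propext (by omega)
  have e3 : (2 * k - m = 1) = (m = 2 * k - 1) := propext (by omega)
  simp only [e1, e2, e3]
  ring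

theorem auxR_zero (k : ℕ) (hk : 2 ≤ k) : (auxR k).coeff 0 = zetaVal (2 * k) ^ 2 / Real.pi ^ 2 := by
  rw [auxR_coeff, auxQQ_coeff k 0 (by omega), if_neg (by omega), if_neg (by omega), if_neg (by omega)]
  simp [auxT, auxC_zero k (by omega)]
  ring

theorem auxR_le (k m : ℕ) (hk : 2 ≤ k) (hm : m ≤ k) : (auxR k).coeff 0 ≤ (auxR k).coeff m := by
  have hp : 0 < Real.pi ^ 2 := by have := Real.pi_pos; positivity
  rcases Nat.eq_zero_or_pos m with rfl | h0
  · exact le_rfl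
  rw [auxR_zero k hk, auxR_coeff, auxQQ_coeff k m hm, if_neg (by omega), div_le_iff₀ hp, add_mul]
  rw [show 4 / Real.pi ^ 2 * auxT k m * Real.pi ^ 2 = 4 * auxT k m by field_simp]
  rcases hm.eq_or_lt with rfl | hm
  · rw [if_pos rfl, if_neg (by omega)]
    linarith [aux_mk m hk]
  · rw [if_neg (by omega)]
    by_cases h1 : m = 1
    · subst h1
      rw [if_pos rfl]
      linarith [aux_m1 k hk]
    · rw [if_neg h1]
      linarith [aux_mm k m (by omega) hm]

theorem auxR_le' (k m : ℕ) (hk : 2 ≤ k) (hm : m ≤ 2 * k) : (auxR k).coeff 0 ≤ (auxR k).coeff m := by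
  by_cases h : m ≤ k
  · exact auxR_le k m hk h
  · rw [← auxR_symm k m hk hm]
    exact auxR_le k _ hk (by omega)

open Polynomial in
theorem auxR_sum (k : ℕ) (hk : 2 ≤ k) : ∑ m ∈ range (2 * k + 1), (auxR k).coeff m =
    (2 * k - 1) ^ 2 * (auxR k).coeff 0 := by
  have hd : (auxR k).natDegree < 2 * k + 1 := by
    rw [Nat.lt_succ_iff, natDegree_le_iff_coeff_eq_zero]
    intro N hN
    rw [auxR_coeff, if_neg (by omega), if_neg (by omega), if_neg (by omega),
      coeff_eq_zero_of_natDegree_lt]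
    · simp
    · have := natDegree_mul_le (p := auxQ k) (q := auxQ k)
      have := auxQ_deg k
      omega
  have h := eval_eq_sum_range' hd 1
  simp only [one_pow, mul_one] at h
  rw [← h, auxR_zero k hk]
  have hq : eval 1 (auxQ k) = (k - 1 / 2) * zetaVal (2 * k) := by
    rw [← aux_sumC k hk, auxQ, eval_finsetSum]; simp
  simp only [auxR, eval_add, eval_mul, eval_C, eval_sub, eval_pow, eval_X, hq, one_pow]
  ring

end

/-- For `k ≥ 2`, the coefficients `A_j` of `|P_k(iz)|²` satisfy
`4k(k−1)|A_{4k}| = ∑_{j=0}^{4k} |A_{4k} − A_j|`. -/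
theorem absPpoly_coeff_identity (k : ℕ) (hk : 2 ≤ k) :
    (4 * k * (k - 1) : ℝ) * |(absPpoly k).coeff (4 * k)|
      = ∑ j ∈ Finset.range (4 * k + 1),
          |(absPpoly k).coeff (4 * k) - (absPpoly k).coeff j| := by
  have hA : (absPpoly k).coeff (4 * k) = (auxR k).coeff 0 := by
    rw [aux_expand k hk, show 4 * k = 2 * (2 * k) by ring, Polynomial.coeff_expand_mul' two_pos,
      ← auxR_symm k 0 hk (by omega), Nat.sub_zero]
  have h0 : 0 ≤ (auxR k).coeff 0 := by
    rw [auxR_zero k hk]; positivity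
  rw [hA, show 4 * k = 2 * (2 * k) by ring, aux_split, abs_of_nonneg h0]
  have e1 : ∀ m ∈ Finset.range (2 * k + 1), |(auxR k).coeff 0 - (absPpoly k).coeff (2 * m)|
      = (auxR k).coeff m - (auxR k).coeff 0 := by
    intro m hm
    have := Finset.mem_range.1 hm
    rw [aux_expand k hk, Polynomial.coeff_expand_mul' two_pos, abs_sub_comm, abs_of_nonneg]
    linarith [auxR_le' k m hk (by omega)]
  have e2 : ∀ m ∈ Finset.range (2 * k), |(auxR k).coeff 0 - (absPpoly k).coeff (2 * m + 1)|
      = (auxR k).coeff 0 := by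
    intro m hm
    rw [aux_expand k hk, Polynomial.coeff_expand two_pos, if_neg (by omega), sub_zero, abs_of_nonneg h0]
  rw [Finset.sum_congr rfl e1, Finset.sum_congr rfl e2, Finset.sum_sub_distrib, auxR_sum k hk]
  simp only [Finset.sum_const, Finset.card_range, nsmul_eq_mul]
  push_cast
  ring
end

section
/- Let k ≥ 2 be an integer. Then for every j with 0 ≤ j ≤ k, B_{2j} B_{2k−2j} (1−2^{1−2j})(1−2^{1−2k+2j}) C(2k,2j) / (−(1−2^{1−2k}) B_{2k}) < 2/(1−2^{1−2k}). (Here the left-hand side is the ratio A_j/A_0 of coefficients of W_k(iz), and in particular the denominator −(1−2^{1−2k})B_{2k} is nonzero.) -/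
open Real in
lemma aux_Z (k : ℕ) (hk : k ≠ 0) : ∃ Z : ℝ, 1 < Z ∧ (1 - 2 / 4 ^ k) * Z < 1 ∧
    (bernoulli (2 * k) : ℝ) = (-1) ^ (k + 1) * 2 * (2 * k).factorial * Z / (2 * π) ^ (2 * k) := by
  have h := hasSum_zeta_nat hk
  set Z : ℝ := (-1 : ℝ) ^ (k + 1) * (2 : ℝ) ^ (2 * k - 1) * π ^ (2 * k) *
    bernoulli (2 * k) / (2 * k).factorial with hZ
  set f : ℕ → ℝ := fun n => 1 / (n : ℝ) ^ (2 * k) with hf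
  have hf0 : f 0 = 0 := by simp [hf, hk]
  have hf1 : f 1 = 1 := by simp [hf]
  have hfe : ∀ n, f (2 * n) = (1 / 4 ^ k) * f n := by
    intro n
    simp only [hf]
    push_cast
    rw [mul_pow, pow_mul 2 2 k]
    norm_num
    ring
  have hpos : ∀ n, 0 < f (n + 1) := by
    intro n
    simp only [hf]
    positivity
  have hE : HasSum (fun n => f (2 * n)) ((1 / 4 ^ k) * Z) := by
    simp_rw [hfe]
    exact h.mul_left _
  have hO : Summable (fun n => f (2 * n + 1)) :=
    h.summable.comp_injective (i := fun n => 2 * n + 1) (fun a b hab => by simpa using hab)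
  have hsplit := tsum_even_add_odd hE.summable hO
  have hE1 := hE.summable.tsum_eq_zero_add
  have hO1 := hO.tsum_eq_zero_add
  have hE' := (summable_nat_add_iff 1).2 hE.summable
  have hO' := (summable_nat_add_iff 1).2 hO
  have hlt : ∀ n, f (2 * (n + 1) + 1) < f (2 * (n + 1)) := by
    intro n
    simp only [hf]
    apply one_div_lt_one_div_of_lt
    · positivity
    · apply pow_lt_pow_left₀
      · push_cast; linarith
      · positivity
      · omega
  have hcmp := Summable.tsum_lt_tsum (i := 0) (fun n => (hlt n).le) (hlt 0) hO' hE'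
  have hOnn : 0 ≤ ∑' n, f (2 * (n + 1) + 1) := tsum_nonneg fun n => (hpos _).le
  rw [hE.tsum_eq] at hE1 hsplit
  rw [h.tsum_eq] at hsplit
  simp only [mul_zero, zero_add, hf0, hf1] at hE1 hO1
  have hEpos : 0 < ∑' n, f (2 * (n + 1)) := lt_of_le_of_lt hOnn hcmp
  refine ⟨Z, by linarith, ?_, ?_⟩
  · have : (1 - 2 / 4 ^ k) * Z = Z - 2 * (1 / 4 ^ k * Z) := by ring
    rw [this]
    linarith
  · have h2 : (2 : ℝ) ^ (2 * k) = 2 * 2 ^ (2 * k - 1) := by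
      rw [← pow_succ']; congr 1; omega
    have hs : ((-1 : ℝ) ^ (k + 1)) * (-1) ^ (k + 1) = 1 := by
      rw [← mul_pow]; simp
    have hF : ((2 * k).factorial : ℝ) ≠ 0 := by positivity
    rw [hZ, mul_pow, h2]
    field_simp
    linear_combination (-(bernoulli (2 * k) : ℝ)) * hs

lemma aux_real (k : ℕ) (hk : 2 ≤ k) :
    -((1 - (2 : ℝ) ^ (1 - 2 * (k : ℤ))) * bernoulli (2 * k)) ≠ 0 ∧
    ∀ j ≤ k,
      (bernoulli (2 * j) : ℝ) * bernoulli (2 * k - 2 * j)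
          * (1 - (2 : ℝ) ^ (1 - 2 * (j : ℤ))) * (1 - (2 : ℝ) ^ (1 - 2 * (k : ℤ) + 2 * j))
          * ((Nat.choose (2 * k) (2 * j)) : ℝ)
          / (-((1 - (2 : ℝ) ^ (1 - 2 * (k : ℤ))) * bernoulli (2 * k)))
        < 2 / (1 - (2 : ℝ) ^ (1 - 2 * (k : ℤ))) := by
  have hz : ∀ n : ℕ, (2 : ℝ) ^ (1 - 2 * (n : ℤ)) = 2 / 4 ^ n := by
    intro n
    rw [zpow_sub₀ (by norm_num), zpow_mul]
    norm_num
  have hpos : ∀ n : ℕ, n ≠ 0 → 0 < 1 - (2 : ℝ) / 4 ^ n := by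
    intro n hn
    have : (4 : ℝ) ^ 1 ≤ 4 ^ n := pow_le_pow_right₀ (by norm_num) (by omega)
    rw [sub_pos, div_lt_one (by positivity)]
    linarith
  obtain ⟨c, hc1, -, hB⟩ := aux_Z k (by omega)
  have hB0 : (bernoulli (2 * k) : ℝ) ≠ 0 := by
    rw [hB]
    have := Real.pi_pos
    have : c ≠ 0 := by linarith
    positivity
  have hk0 := hpos k (by omega)
  refine ⟨?_, ?_⟩
  · rw [hz]
    exact neg_ne_zero.2 (mul_ne_zero hk0.ne' hB0)
  intro j hj
  obtain ⟨m, rfl⟩ := Nat.exists_eq_add_of_le hj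
  have e1 : 2 * (j + m) - 2 * j = 2 * m := by omega
  have e2 : (1 - 2 * ((j + m : ℕ) : ℤ) + 2 * j) = 1 - 2 * (m : ℤ) := by push_cast; ring
  rw [e1, e2, hz, hz, hz]
  have h1lt : 1 < 2 / (1 - (2 : ℝ) / 4 ^ (j + m)) := by
    rw [lt_div_iff₀ hk0]
    have : (0 : ℝ) < 2 / 4 ^ (j + m) := by positivity
    linarith
  rcases Nat.eq_zero_or_pos j with rfl | hj0
  · simp only [zero_add] at *
    convert h1lt using 1
    generalize 1 - (2 : ℝ) / 4 ^ m = w at hk0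
    simp
    field_simp
    norm_num
  rcases Nat.eq_zero_or_pos m with rfl | hm0
  · simp only [add_zero] at *
    convert h1lt using 1
    generalize 1 - (2 : ℝ) / 4 ^ j = w at hk0
    simp
    field_simp
    norm_num
  obtain ⟨a, ha1, ha, hA⟩ := aux_Z j (by omega)
  obtain ⟨b, hb1, hb, hBm⟩ := aux_Z m (by omega)
  have hu := hpos j (by omega)
  have hv := hpos m (by omega)
  set u := 1 - (2 : ℝ) / 4 ^ j
  set v := 1 - (2 : ℝ) / 4 ^ m
  set w := 1 - (2 : ℝ) / 4 ^ (j + m)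
  have hch : ((Nat.choose (2 * (j + m)) (2 * j)) : ℝ) * (2 * j).factorial * (2 * m).factorial
      = (2 * (j + m)).factorial := by
    have := Nat.choose_mul_factorial_mul_factorial (n := 2 * (j + m)) (k := 2 * j) (by omega)
    rw [e1] at this
    exact_mod_cast this
  have hkey : c * ((bernoulli (2 * j) : ℝ) * bernoulli (2 * m) *
      (Nat.choose (2 * (j + m)) (2 * j))) = -(2 * a * b) * bernoulli (2 * (j + m)) := by
    rw [hB, hA, hBm, ← hch]
    have := Real.pi_pos
    rw [mul_add 2 j m, pow_add (2 * Real.pi)]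
    field_simp
    ring
  have hratio : (bernoulli (2 * j) : ℝ) * bernoulli (2 * m) * u * v *
      (Nat.choose (2 * (j + m)) (2 * j)) / (-(w * bernoulli (2 * (j + m))))
      = 2 * ((u * a) * (v * b)) / c / w := by
    have : c ≠ 0 := by linarith
    field_simp
    linear_combination -hkey
  rw [hratio]
  apply div_lt_div_of_pos_right _ hk0
  rw [div_lt_iff₀ (by linarith)]
  have : u * a * (v * b) < 1 := by
    have h1 : 0 < u * a := by positivity
    have h2 : 0 < v * b := by positivity
    nlinarith
  linarith


/-- For `k ≥ 2` and `0 ≤ j ≤ k`, the ratio `A_j/A_0` of coefficients of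
`W_k(iz)` satisfies
`B_{2j} B_{2k−2j} (1−2^{1−2j})(1−2^{1−2k+2j}) C(2k,2j) / (−(1−2^{1−2k}) B_{2k})
< 2/(1−2^{1−2k})`; in particular the denominator `−(1−2^{1−2k}) B_{2k}` is nonzero. -/
theorem W_coeff_ratio_bound (k : ℕ) (hk : 2 ≤ k) :
    -((1 - (2 : ℚ) ^ (1 - 2 * (k : ℤ))) * bernoulli (2 * k)) ≠ 0 ∧
    ∀ j ≤ k,
      bernoulli (2 * j) * bernoulli (2 * k - 2 * j)
          * (1 - (2 : ℚ) ^ (1 - 2 * (j : ℤ))) * (1 - (2 : ℚ) ^ (1 - 2 * (k : ℤ) + 2 * j))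
          * ((Nat.choose (2 * k) (2 * j)) : ℚ)
          / (-((1 - (2 : ℚ) ^ (1 - 2 * (k : ℤ))) * bernoulli (2 * k)))
        < 2 / (1 - (2 : ℚ) ^ (1 - 2 * (k : ℤ))) := by
  obtain ⟨h1, h2⟩ := aux_real k hk
  refine ⟨?_, ?_⟩
  · intro h
    apply h1
    have h' := congrArg (fun x : ℚ => (x : ℝ)) h
    push_cast at h'
    exact h'
  · intro j hj
    have := h2 j hj
    rw [← Rat.cast_lt (K := ℝ)]
    push_cast
    exact this
end
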